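/- arXiv:1504.06681 — 2 statements merged into one kernel-verified Lean document; each statement's English description precedes it below -/
import Mathlib

section
/- For every y ∈ (ℝᵐ)^T, strong duality holds for the smoothed tracking problem: min_{x ∈ (ℝⁿ)^T} p(x; y) = Σ_{t=1}^T (1/2)‖y_t‖₂² − (1/2)·min_{s ∈ S} Σ_{t=1}^T ‖P y_t − (Kᵀ)† s_t‖₂². Moreover, both minima are attained and there exist minimizers x* of the left-hand problem and s* ∈ S of the right-hand problem satisfying KᵀK x*_t = Kᵀ y_t − s*_t for all t ∈ {1,…,T}. -/
open Finset

noncomputable def norm2sq {m : ℕ} (v : Fin m → ℝ) : ℝ := ∑ i, (v i) ^ 2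
noncomputable def norm1 {n : ℕ} (v : Fin n → ℝ) : ℝ := ∑ i, |v i|

noncomputable def pinv {m n : ℕ} (K : Matrix (Fin m) (Fin n) ℝ) :
    Matrix (Fin n) (Fin m) ℝ := (K.transpose * K)⁻¹ * K.transpose

noncomputable def proj {m n : ℕ} (K : Matrix (Fin m) (Fin n) ℝ) :
    Matrix (Fin m) (Fin m) ℝ := K * pinv K

/-- Pseudoinverse of `Kᵀ`, namely `(Kᵀ)† = K (KᵀK)⁻¹`. -/
noncomputable def pinvT {m n : ℕ} (K : Matrix (Fin m) (Fin n) ℝ) :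
    Matrix (Fin m) (Fin n) ℝ := K * (K.transpose * K)⁻¹

noncomputable def trackCost {m n : ℕ} (β : ℝ) (K : Matrix (Fin m) (Fin n) ℝ)
    (T : ℕ) (y : ℕ → Fin m → ℝ) (x : ℕ → Fin n → ℝ) : ℝ :=
  ∑ t ∈ Finset.Icc 1 T,
    ((1 / 2) * norm2sq (y t - K.mulVec (x t)) + β * norm1 (x t - x (t - 1)))

/-- The dual feasible set `S`. -/
def dualSet {n : ℕ} (β : ℝ) (T : ℕ) : Set (ℕ → Fin n → ℝ) :=
  {s | ∃ lam : ℕ → Fin n → ℝ, lam (T + 1) = 0 ∧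
        (∀ t ∈ Finset.Icc 1 T, ∀ i, |lam t i| ≤ β) ∧
        (∀ t ∈ Finset.Icc 1 T, s t = lam t - lam (t + 1))}

/-- Dual objective `Σ_t ‖P y_t − (Kᵀ)† s_t‖²`. -/
noncomputable def dualObj {m n : ℕ} (K : Matrix (Fin m) (Fin n) ℝ) (T : ℕ)
    (y : ℕ → Fin m → ℝ) (s : ℕ → Fin n → ℝ) : ℝ :=
  ∑ t ∈ Finset.Icc 1 T, norm2sq ((proj K).mulVec (y t) - (pinvT K).mulVec (s t))


lemma norm2sq_eq_dot {m : ℕ} (v : Fin m → ℝ) : norm2sq v = v ⬝ᵥ v := by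
  simp [norm2sq, dotProduct, sq]

lemma norm2sq_nonneg {m : ℕ} (v : Fin m → ℝ) : 0 ≤ norm2sq v :=
  Finset.sum_nonneg fun i _ => sq_nonneg (v i)

lemma sum_parts {n : ℕ} (T : ℕ) (x lam : ℕ → Fin n → ℝ) (hx : x 0 = 0) :
    ∑ t ∈ Finset.Icc 1 T, x t ⬝ᵥ (lam t - lam (t + 1)) + x T ⬝ᵥ lam (T + 1)
      = ∑ t ∈ Finset.Icc 1 T, (x t - x (t - 1)) ⬝ᵥ lam t := by
  induction T with
  | zero => simp [hx]
  | succ T ih =>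
    rw [Finset.sum_Icc_succ_top (by omega), Finset.sum_Icc_succ_top (by omega), ← ih]
    simp only [dotProduct_sub, sub_dotProduct, Nat.add_sub_cancel]
    ring

lemma dot_le_norm1 {n : ℕ} (β : ℝ) (d l : Fin n → ℝ) (h : ∀ i, |l i| ≤ β) :
    d ⬝ᵥ l ≤ β * norm1 d := by
  unfold norm1 dotProduct
  rw [Finset.mul_sum]
  apply Finset.sum_le_sum
  intro i _
  calc d i * l i ≤ |d i * l i| := le_abs_self _
    _ = |l i| * |d i| := by rw [abs_mul, mul_comm]
    _ ≤ β * |d i| := mul_le_mul_of_nonneg_right (h i) (abs_nonneg _)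

/-- Weak-duality bound for the switching cost. -/
lemma dual_le {n : ℕ} (β : ℝ) (T : ℕ) (x s : ℕ → Fin n → ℝ) (hx : x 0 = 0)
    (hs : s ∈ dualSet β T) :
    ∑ t ∈ Finset.Icc 1 T, x t ⬝ᵥ s t
      ≤ ∑ t ∈ Finset.Icc 1 T, β * norm1 (x t - x (t - 1)) := by
  obtain ⟨lam, h0, hb, hl⟩ := hs
  have h1 : ∑ t ∈ Finset.Icc 1 T, x t ⬝ᵥ s t
      = ∑ t ∈ Finset.Icc 1 T, x t ⬝ᵥ (lam t - lam (t + 1)) :=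
    Finset.sum_congr rfl fun t ht => by rw [hl t ht]
  have h2 := sum_parts T x lam hx
  rw [h0] at h2
  simp only [dotProduct_zero, add_zero] at h2
  rw [h1, h2]
  exact Finset.sum_le_sum fun t ht => dot_le_norm1 β _ _ (hb t ht)

lemma dual_reach {n : ℕ} (β : ℝ) (hβ : 0 < β) (T : ℕ) (x : ℕ → Fin n → ℝ) (hx : x 0 = 0) :
    ∃ s ∈ dualSet β T, ∑ t ∈ Finset.Icc 1 T, x t ⬝ᵥ s t
      = ∑ t ∈ Finset.Icc 1 T, β * norm1 (x t - x (t - 1)) := by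
  let lam : ℕ → Fin n → ℝ := fun t i =>
    if t ≤ T then (if 0 ≤ x t i - x (t - 1) i then β else -β) else 0
  have h0 : lam (T + 1) = 0 := by
    funext i
    simp [lam]
  refine ⟨fun t => lam t - lam (t + 1), ⟨lam, h0, ?_, fun _ _ => rfl⟩, ?_⟩
  · intro t ht i
    simp only [lam]
    split_ifs <;> simp [abs_of_pos hβ, hβ.le]
  · have h2 := sum_parts T x lam hx
    rw [h0] at h2
    simp only [dotProduct_zero, add_zero] at h2
    rw [h2]
    refine Finset.sum_congr rfl fun t ht => ?_
    have htT : t ≤ T := (Finset.mem_Icc.mp ht).2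
    unfold norm1 dotProduct
    rw [Finset.mul_sum]
    refine Finset.sum_congr rfl fun i _ => ?_
    simp only [lam, htT, if_true, Pi.sub_apply]
    split_ifs with h
    · rw [abs_of_nonneg h, mul_comm]
    · rw [abs_of_neg (not_le.mp h)]; ring

lemma dual_min {m n : ℕ} (β : ℝ) (hβ : 0 < β) (T : ℕ) (K : Matrix (Fin m) (Fin n) ℝ)
    (y : ℕ → Fin m → ℝ) :
    ∃ s ∈ (dualSet β T : Set (ℕ → Fin n → ℝ)), ∀ s' ∈ dualSet β T,
      dualObj K T y s ≤ dualObj K T y s' := by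
  let hi : ℕ → Fin n → ℝ := fun t _ => if t ∈ Finset.Icc 1 T then β else 0
  have hhi : 0 ≤ hi := by
    intro t i
    simp only [hi]
    split_ifs <;> simp [hβ.le]
  have hc : IsCompact (Set.Icc (-hi) hi) := isCompact_Icc
  have hne : (Set.Icc (-hi) hi).Nonempty := ⟨0, neg_nonpos.mpr hhi, hhi⟩
  have hcont : Continuous fun lam : ℕ → Fin n → ℝ =>
      dualObj K T y (fun t => lam t - lam (t + 1)) := by
    unfold dualObj norm2sq Matrix.mulVec dotProduct
    simp only [Pi.sub_apply]
    fun_prop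
  obtain ⟨lam, hlam, hmin⟩ := hc.exists_isMinOn hne hcont.continuousOn
  refine ⟨fun t => lam t - lam (t + 1), ⟨lam, ?_, ?_, fun _ _ => rfl⟩, ?_⟩
  · funext i
    have h1 := hlam.1 (T + 1) i
    have h2 := hlam.2 (T + 1) i
    simp [hi] at h1 h2
    exact le_antisymm h2 h1
  · intro t ht i
    have h1 := hlam.1 t i
    have h2 := hlam.2 t i
    simp only [hi, ht, if_true, Pi.neg_apply] at h1 h2
    exact abs_le.mpr ⟨h1, h2⟩
  · rintro s' ⟨mu, h0, hb, hl⟩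
    let mu' : ℕ → Fin n → ℝ := fun t => if t ∈ Finset.Icc 1 T then mu t else 0
    have hmu' : mu' ∈ Set.Icc (-hi) hi := by
      constructor
      · intro t i
        by_cases ht : t ∈ Finset.Icc 1 T
        · simp only [mu', hi, ht, if_true, Pi.neg_apply]
          exact (abs_le.mp (hb t ht i)).1
        · simp only [mu', hi, ht, if_false, Pi.neg_apply]
          simp
      · intro t i
        by_cases ht : t ∈ Finset.Icc 1 T
        · simp only [mu', hi, ht, if_true]
          exact (abs_le.mp (hb t ht i)).2
        · simp only [mu', hi, ht, if_false]
          simp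
    have h := hmin hmu'
    refine le_trans h (le_of_eq ?_)
    unfold dualObj
    refine Finset.sum_congr rfl fun t ht => ?_
    have e2 : mu' (t + 1) = mu (t + 1) := by
      by_cases ht1 : t + 1 ∈ Finset.Icc 1 T
      · simp only [mu', ht1, if_true]
      · have : t + 1 = T + 1 := by
          simp only [Finset.mem_Icc] at ht ht1
          omega
        simp only [mu', ht1, if_false]
        rw [this, h0]
    have e1 : mu' t = mu t := by simp only [mu', ht, if_true]
    rw [hl t ht]
    simp only [e1, e2]

lemma dualSet_segment {n : ℕ} (β : ℝ) (T : ℕ) (s s' : ℕ → Fin n → ℝ)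
    (hs : s ∈ dualSet β T) (hs' : s' ∈ dualSet β T) (e : ℝ) (he0 : 0 ≤ e) (he1 : e ≤ 1) :
    (fun t => s t + e • (s' t - s t)) ∈ dualSet β T := by
  obtain ⟨lam, h0, hb, hl⟩ := hs
  obtain ⟨mu, h0', hb', hl'⟩ := hs'
  refine ⟨fun t => lam t + e • (mu t - lam t), by simp [h0, h0'], ?_, ?_⟩
  · intro t ht i
    have a := abs_le.mp (hb t ht i)
    have b := abs_le.mp (hb' t ht i)
    simp only [Pi.add_apply, Pi.smul_apply, Pi.sub_apply, smul_eq_mul]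
    rw [abs_le]
    constructor <;> nlinarith
  · intro t ht
    funext i
    simp only [hl t ht, hl' t ht, Pi.add_apply, Pi.smul_apply, Pi.sub_apply, smul_eq_mul]
    ring

lemma first_order (A B : ℝ) (h : ∀ e : ℝ, 0 ≤ e → e ≤ 1 → 0 ≤ -2 * e * A + e ^ 2 * B) :
    A ≤ 0 := by
  by_contra hA
  push Not at hA
  have hB : 0 < |B| + A := by positivity
  have h1 := h (A / (|B| + A)) (by positivity) (by
    rw [div_le_one hB]; linarith [abs_nonneg B])
  set e := A / (|B| + A) with he
  have hep : 0 < e := by positivity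
  have h2 : e * (|B| + A) = A := by rw [he]; field_simp
  have h3 : e * B ≤ e * |B| := mul_le_mul_of_nonneg_left (le_abs_self B) hep.le
  have h4 : e * B < 2 * A := by nlinarith
  nlinarith

/-- Strong duality for the smoothed tracking problem: the primal minimum equals
`Σ ½‖y_t‖² − ½·min_{s∈S} Σ‖P y_t − (Kᵀ)† s_t‖²`, both minima are attained, and the
minimizers are linked by `KᵀK x*_t = Kᵀ y_t − s*_t`. -/
theorem strong_duality_smoothed_tracking
    (m n T : ℕ) (hm : 1 ≤ m) (hn : 1 ≤ n) (hT : 1 ≤ T)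
    (K : Matrix (Fin m) (Fin n) ℝ) (hK : IsUnit (K.transpose * K).det)
    (β : ℝ) (hβ : 0 < β)
    (y : ℕ → Fin m → ℝ) :
    ∃ (xstar : ℕ → Fin n → ℝ) (sstar : ℕ → Fin n → ℝ),
      xstar 0 = 0 ∧
      (∀ x : ℕ → Fin n → ℝ, x 0 = 0 →
        trackCost β K T y xstar ≤ trackCost β K T y x) ∧
      sstar ∈ dualSet β T ∧
      (∀ s ∈ dualSet β T, dualObj K T y sstar ≤ dualObj K T y s) ∧
      trackCost β K T y xstar
        = (∑ t ∈ Finset.Icc 1 T, (1 / 2) * norm2sq (y t))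
          - (1 / 2) * dualObj K T y sstar ∧
      (∀ t ∈ Finset.Icc 1 T,
        (K.transpose * K).mulVec (xstar t) = K.transpose.mulVec (y t) - sstar t) := by
  obtain ⟨s, hs, hmin⟩ := dual_min β hβ T K y
  set G := K.transpose * K with hG
  let x : ℕ → Fin n → ℝ := fun t =>
    if t = 0 then 0 else G⁻¹.mulVec (K.transpose.mulVec (y t) - s t)
  have hx0 : x 0 = 0 := by simp [x]
  have hGx : ∀ t ∈ Finset.Icc 1 T, G.mulVec (x t) = K.transpose.mulVec (y t) - s t := by
    intro t ht
    have : t ≠ 0 := by simp only [Finset.mem_Icc] at ht; omega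
    simp only [x, this, if_false]
    rw [Matrix.mulVec_mulVec, Matrix.mul_nonsing_inv _ hK, Matrix.one_mulVec]
  have hu : ∀ t ∈ Finset.Icc 1 T,
      (proj K).mulVec (y t) - (pinvT K).mulVec (s t) = K.mulVec (x t) := by
    intro t ht
    have : t ≠ 0 := by simp only [Finset.mem_Icc] at ht; omega
    simp only [x, this, if_false, proj, pinvT, pinv, ← hG]
    rw [Matrix.mulVec_sub, Matrix.mulVec_sub]
    simp only [Matrix.mulVec_mulVec]
  -- adjoint identities
  have hadj : ∀ (a : Fin n → ℝ) (b : Fin m → ℝ),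
      a ⬝ᵥ K.transpose.mulVec b = K.mulVec a ⬝ᵥ b := by
    intro a b
    rw [Matrix.dotProduct_mulVec, Matrix.vecMul_transpose]
  have hsx : ∀ t ∈ Finset.Icc 1 T, ∀ a : Fin n → ℝ,
      a ⬝ᵥ s t = K.mulVec a ⬝ᵥ y t - K.mulVec a ⬝ᵥ K.mulVec (x t) := by
    intro t ht a
    have : s t = K.transpose.mulVec (y t) - K.transpose.mulVec (K.mulVec (x t)) := by
      rw [Matrix.mulVec_mulVec, ← hG, hGx t ht]; simp
    rw [this, dotProduct_sub, hadj, hadj]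
  have hKw : ∀ a d : Fin n → ℝ, K.mulVec a ⬝ᵥ (pinvT K).mulVec d = a ⬝ᵥ d := by
    intro a d
    rw [← hadj, Matrix.mulVec_mulVec, pinvT, ← Matrix.mul_assoc, ← hG,
      Matrix.mul_nonsing_inv _ hK, Matrix.one_mulVec]
  have hvar : ∀ s' ∈ dualSet β T,
      ∑ t ∈ Finset.Icc 1 T, x t ⬝ᵥ s' t ≤ ∑ t ∈ Finset.Icc 1 T, x t ⬝ᵥ s t := by
    intro s' hs'
    rw [← sub_nonpos, ← Finset.sum_sub_distrib]
    apply first_order _ (∑ t ∈ Finset.Icc 1 T, norm2sq ((pinvT K).mulVec (s' t - s t)))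
    intro e he0 he1
    have h := hmin _ (dualSet_segment β T s s' hs hs' e he0 he1)
    rw [← sub_nonneg] at h
    refine le_of_le_of_eq h ?_
    unfold dualObj
    rw [← Finset.sum_sub_distrib, Finset.mul_sum, Finset.mul_sum, ← Finset.sum_add_distrib]
    refine Finset.sum_congr rfl fun t ht => ?_
    have e1 : (proj K).mulVec (y t) - (pinvT K).mulVec (s t + e • (s' t - s t))
        = K.mulVec (x t) - e • (pinvT K).mulVec (s' t - s t) := by
      rw [← hu t ht, Matrix.mulVec_add, Matrix.mulVec_smul]; abel
    rw [e1, hu t ht, ← dotProduct_sub, ← hKw (x t) (s' t - s t)]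
    simp only [norm2sq_eq_dot, sub_dotProduct, dotProduct_sub, smul_dotProduct, dotProduct_smul,
      smul_eq_mul]
    rw [dotProduct_comm ((pinvT K).mulVec (s' t - s t)) (K.mulVec (x t))]
    ring
  have heq : ∑ t ∈ Finset.Icc 1 T, x t ⬝ᵥ s t
      = ∑ t ∈ Finset.Icc 1 T, β * norm1 (x t - x (t - 1)) := by
    apply le_antisymm (dual_le β T x s hx0 hs)
    obtain ⟨s', hs', h⟩ := dual_reach β hβ T x hx0
    rw [← h]
    exact hvar s' hs'
  have hval : trackCost β K T y x
        = (∑ t ∈ Finset.Icc 1 T, (1 / 2) * norm2sq (y t))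
          - (1 / 2) * dualObj K T y s := by
    unfold trackCost dualObj
    rw [Finset.sum_add_distrib, ← heq, ← Finset.sum_add_distrib, Finset.mul_sum,
      ← Finset.sum_sub_distrib]
    refine Finset.sum_congr rfl fun t ht => ?_
    rw [hu t ht, hsx t ht]
    simp only [norm2sq_eq_dot, sub_dotProduct, dotProduct_sub]
    rw [dotProduct_comm (y t) (K.mulVec (x t))]
    ring
  refine ⟨x, s, hx0, ?_, hs, hmin, hval, hGx⟩
  intro z hz
  rw [hval]
  have hw := dual_le β T z s hz hs
  unfold trackCost dualObj
  rw [Finset.sum_add_distrib, Finset.mul_sum, ← Finset.sum_sub_distrib]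
  refine le_trans ?_ (add_le_add_right hw _)
  rw [← Finset.sum_add_distrib]
  refine Finset.sum_le_sum fun t ht => ?_
  rw [hu t ht, hsx t ht]
  have hn := norm2sq_nonneg (K.mulVec (z t) - K.mulVec (x t))
  simp only [norm2sq_eq_dot, sub_dotProduct, dotProduct_sub] at hn ⊢
  rw [dotProduct_comm (K.mulVec (x t)) (K.mulVec (z t))] at hn
  rw [dotProduct_comm (y t) (K.mulVec (z t))]
  linarith
end

section
/- If x* ∈ (ℝⁿ)^T minimizes x ↦ p(x; y), then for every t ∈ {1,…,T} there exists ξ_t ∈ ℝⁿ with ‖ξ_t‖_∞ ≤ 2β such that x*_t = (KᵀK)⁻¹(Kᵀ y_t + ξ_t). In other words, every coordinate of the dynamic offline optimum lies within a 2β-perturbation (in the above sense) of the unconstrained least-squares tracker (KᵀK)⁻¹Kᵀ y_t. -/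
open Finset

theorem norm1_add_le' {n : ℕ} (a b : Fin n → ℝ) : norm1 (a + b) ≤ norm1 a + norm1 b := by
  unfold norm1
  rw [← Finset.sum_add_distrib]
  exact Finset.sum_le_sum fun i _ => abs_add_le _ _

theorem norm1_single' {n : ℕ} (i : Fin n) (e : ℝ) : norm1 (Pi.single i e) = |e| := by
  unfold norm1
  rw [Finset.sum_eq_single i]
  · simp
  · intro j _ hj
    simp [hj]
  · simp

theorem norm1_neg' {n : ℕ} (a : Fin n → ℝ) : norm1 (-a) = norm1 a := by
  simp [norm1]

theorem norm2sq_pert {m n : ℕ} (K : Matrix (Fin m) (Fin n) ℝ) (y : Fin m → ℝ)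
    (x : Fin n → ℝ) (i : Fin n) (e : ℝ) :
    norm2sq (y - K.mulVec (x + Pi.single i e)) = norm2sq (y - K.mulVec x)
      - 2 * e * (K.transpose.mulVec (y - K.mulVec x)) i + e ^ 2 * ∑ j, K j i ^ 2 := by
  have h : K.transpose.mulVec (y - K.mulVec x) i = ∑ j, K j i * (y - K.mulVec x) j := rfl
  rw [h]
  unfold norm2sq
  rw [Finset.mul_sum, Finset.mul_sum, ← Finset.sum_sub_distrib, ← Finset.sum_add_distrib]
  refine Finset.sum_congr rfl fun j _ => ?_
  rw [Matrix.mulVec_add]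
  simp only [Pi.sub_apply, Pi.add_apply, Matrix.mulVec_single, Pi.smul_apply, Matrix.col_apply,
    MulOpposite.smul_eq_mul_unop, MulOpposite.unop_op]
  ring

theorem le_of_quad (g b c : ℝ) (hb : 0 ≤ c) (h : ∀ e : ℝ, 0 < e → e * g ≤ e * b + e ^ 2 * c) :
    g ≤ b := by
  by_contra! hlt
  have hc : 0 < c + 1 := by linarith
  have he : 0 < (g - b) / (c + 1) := div_pos (by linarith) hc
  have h1 := h _ he
  have h2 : (g - b) / (c + 1) * (c + 1) = g - b := by field_simp
  set e := (g - b) / (c + 1)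
  nlinarith [mul_pos he he]

/-- Every coordinate of the dynamic offline optimum lies within a `2β`-perturbation of
the unconstrained least-squares tracker: `x*_t = (KᵀK)⁻¹(Kᵀ y_t + ξ_t)` with
`‖ξ_t‖_∞ ≤ 2β`. -/
theorem dynamic_optimum_near_least_squares
    (m n T : ℕ) (hm : 1 ≤ m) (hn : 1 ≤ n) (hT : 1 ≤ T)
    (K : Matrix (Fin m) (Fin n) ℝ) (hK : IsUnit (K.transpose * K).det)
    (β : ℝ) (hβ : 0 < β)
    (y : ℕ → Fin m → ℝ)
    (xstar : ℕ → Fin n → ℝ) (hxstar0 : xstar 0 = 0)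
    (hxstar : ∀ x : ℕ → Fin n → ℝ, x 0 = 0 →
      trackCost β K T y xstar ≤ trackCost β K T y x) :
    ∀ t ∈ Finset.Icc 1 T, ∃ ξ : Fin n → ℝ,
      (∀ i, |ξ i| ≤ 2 * β) ∧
      xstar t = (K.transpose * K)⁻¹.mulVec (K.transpose.mulVec (y t) + ξ) := by
  intro t ht
  obtain ⟨ht1, htT⟩ := Finset.mem_Icc.mp ht
  have key : ∀ (i : Fin n) (e : ℝ),
      e * (K.transpose.mulVec (y t - K.mulVec (xstar t))) i
        ≤ |e| * (2 * β) + e ^ 2 * ((1 / 2) * ∑ j, K j i ^ 2) := by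
    intro i e
    set g := (K.transpose.mulVec (y t - K.mulVec (xstar t))) i with hg
    set c := ∑ j, K j i ^ 2 with hc
    have h0 := hxstar (Function.update xstar t (xstar t + Pi.single i e)) (by
      rw [Function.update_of_ne (by omega)]; exact hxstar0)
    have h1 : trackCost β K T y (Function.update xstar t (xstar t + Pi.single i e)) ≤
        trackCost β K T y xstar + ∑ s ∈ Finset.Icc 1 T,
          ((if s = t then (-(e * g) + (1 / 2) * (e ^ 2 * c) + β * |e|) else 0)
            + (if s = t + 1 then β * |e| else 0)) := by
      unfold trackCost
      rw [← Finset.sum_add_distrib]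
      refine Finset.sum_le_sum fun s hs => ?_
      obtain ⟨hs1, hsT⟩ := Finset.mem_Icc.mp hs
      by_cases hst : s = t
      · subst hst
        rw [Function.update_self, Function.update_of_ne (by omega), norm2sq_pert, ← hg, ← hc,
          if_pos rfl, if_neg (by omega)]
        have := norm1_add_le' (xstar s - xstar (s - 1)) (Pi.single i e)
        rw [norm1_single', sub_add_eq_add_sub] at this
        nlinarith [mul_le_mul_of_nonneg_left this hβ.le]
      · rw [Function.update_of_ne hst, if_neg hst]
        by_cases hs2 : s = t + 1
        · subst hs2
          rw [if_pos rfl, Nat.add_sub_cancel, Function.update_self]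
          have := norm1_add_le' (xstar (t + 1) - xstar t) (-Pi.single i e)
          rw [norm1_neg', norm1_single', ← sub_eq_add_neg, sub_sub] at this
          nlinarith [mul_le_mul_of_nonneg_left this hβ.le]
        · rw [if_neg hs2, Function.update_of_ne (by omega)]
          simp
    rw [Finset.sum_add_distrib, Finset.sum_ite_eq', Finset.sum_ite_eq', if_pos ht] at h1
    have hbe : 0 ≤ β * |e| := by positivity
    have h2 : (if t + 1 ∈ Finset.Icc 1 T then β * |e| else 0) ≤ β * |e| := by
      split_ifs
      · exact le_rfl
      · exact hbe
    linarith
  refine ⟨-(K.transpose.mulVec (y t - K.mulVec (xstar t))), fun i => ?_, ?_⟩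
  · rw [Pi.neg_apply, abs_neg, abs_le']
    have hc : 0 ≤ (1 / 2) * ∑ j, K j i ^ 2 := by positivity
    constructor
    · refine le_of_quad _ _ _ hc fun e he => ?_
      have := key i e
      rwa [abs_of_pos he] at this
    · refine le_of_quad _ _ _ hc fun e he => ?_
      have := key i (-e)
      rw [abs_neg, abs_of_pos he] at this
      linarith
  · rw [Matrix.mulVec_sub, neg_sub, add_sub_cancel, Matrix.mulVec_mulVec, Matrix.mulVec_mulVec,
      Matrix.mul_assoc, Matrix.nonsing_inv_mul _ hK, Matrix.one_mulVec]
end
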